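/- arXiv:2001.09384 — 7 statements merged into one kernel-verified Lean document; each statement's English description precedes it below -/
import Mathlib

section
/- Let φ be a normalized symmetric Bayes risk and let m ≥ 2 be an integer. Then for every v with 0 < v ≤ m + 1 and every u with 0 < u ≤ min{1, v}, one has v·φ(u/v) ≤ (m+1)·φ(1/(m+1)). -/
/-!
For `u ≤ v ≤ w` the point `u / w` lies between `0` and `u / v`, so concavity and `φ 0 = 0` make the
perspective nondecreasing in its second variable, and `v` may be replaced by `w = m + 1`. Concavity
and symmetry make `φ` nondecreasing on `[0, 1/2]`, and `1 / w` lies in this interval, so `u` may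
then be replaced by `1`.
-/

open Set

variable {𝕜 E β : Type*} [Field 𝕜]

/-- The perspective of `f`, the homogeneous extension `(x, t) ↦ t • f (x / t)`. Scaling by `t⁻¹`
replaces division, so that `f` may be defined on any module; only `0 < t` is meaningful. -/
def perspective [SMul 𝕜 E] [SMul 𝕜 β] (f : E → β) (x : E) (t : 𝕜) : β :=
  t • f (t⁻¹ • x)

variable [LinearOrder 𝕜] [IsStrictOrderedRing 𝕜]

theorem perspective_le_perspective_right_of_concaveOn
    [AddCommMonoid E] [Module 𝕜 E]
    [AddCommMonoid β] [PartialOrder β] [IsOrderedAddMonoid β] [Module 𝕜 β] [PosSMulMono 𝕜 β]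
    {s : Set E} {f : E → β} (hf : ConcaveOn 𝕜 s f) (hs : 0 ∈ s) (hf0 : 0 ≤ f 0)
    {x : E} {t w : 𝕜} (ht : 0 < t) (htw : t ≤ w) (hx : t⁻¹ • x ∈ s) :
    perspective f x t ≤ perspective f x w := by
  have hw : 0 < w := ht.trans_le htw
  have hweight : 0 ≤ 1 - t / w := sub_nonneg.mpr ((div_le_one hw).mpr htw)
  have hchord : (t / w) • f (t⁻¹ • x) ≤ f (w⁻¹ • x) :=
    calc (t / w) • f (t⁻¹ • x)
        ≤ (t / w) • f (t⁻¹ • x) + (1 - t / w) • f 0 :=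
          le_add_of_nonneg_right (smul_nonneg hweight hf0)
      _ ≤ f ((t / w) • t⁻¹ • x + (1 - t / w) • (0 : E)) :=
          hf.2 hx hs (by positivity) hweight (add_sub_cancel _ _)
      _ = f (w⁻¹ • x) := by
          rw [smul_zero, add_zero, smul_smul, div_mul_eq_mul_div, mul_inv_cancel₀ ht.ne', one_div]
  calc t • f (t⁻¹ • x)
      = w • (t / w) • f (t⁻¹ • x) := by rw [smul_smul, mul_div_cancel₀ _ hw.ne']
    _ ≤ w • f (w⁻¹ • x) := smul_le_smul_of_nonneg_left hchord hw.le

theorem monotoneOn_Icc_midpoint_of_quasiconcaveOn_of_symmetric [Preorder β]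
    {a b : 𝕜} {f : 𝕜 → β} (hf : QuasiconcaveOn 𝕜 (Icc a b) f)
    (hsymm : ∀ x ∈ Icc a b, f x = f (a + b - x)) :
    MonotoneOn f (Icc a ((a + b) / 2)) := by
  intro x hx y hy hxy
  have hxab : x ∈ Icc a b := ⟨hx.1, by linarith [hx.1, hx.2]⟩
  have hreflect : a + b - x ∈ Icc a b := ⟨by linarith [hxab.2], by linarith [hx.1]⟩
  have hbetween : y ∈ Icc x (a + b - x) := ⟨hxy, by linarith [hy.2]⟩
  -- The superlevel set of `f` at height `f x` is convex and contains both `x` and its reflection.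
  exact ((hf (f x)).ordConnected.out ⟨hxab, le_rfl⟩ ⟨hreflect, (hsymm x hxab).le⟩ hbetween).2

theorem perspective_le_at_one_over_m_add_one_general
    [AddCommMonoid β] [PartialOrder β] [IsOrderedAddMonoid β] [Module 𝕜 β] [PosSMulMono 𝕜 β]
    {φ : 𝕜 → β} (hconc : ConcaveOn 𝕜 (Icc 0 1) φ)
    (hsym : ∀ x ∈ Icc (0 : 𝕜) 1, φ x = φ (1 - x)) (h0 : 0 ≤ φ 0)
    {u v s w : 𝕜} (hv : 0 < v) (hvw : v ≤ w) (hu : 0 ≤ u) (huv : u ≤ v) (hus : u ≤ s)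
    (hsw : s ≤ w / 2) :
    perspective φ u v ≤ perspective φ s w := by
  have hw : 0 < w := hv.trans_le hvw
  have hmem : v⁻¹ • u ∈ Icc (0 : 𝕜) 1 :=
    ⟨by positivity, (inv_mul_le_one₀ hv).mpr huv⟩
  have hmono : MonotoneOn φ (Icc 0 (1 / 2)) := by
    simpa only [zero_add] using
      monotoneOn_Icc_midpoint_of_quasiconcaveOn_of_symmetric hconc.quasiconcaveOn
        (by simpa only [zero_add] using hsym)
  have hle : w⁻¹ • u ≤ w⁻¹ • s := by gcongr
  have hhalf : w⁻¹ • s ≤ 1 / 2 := (inv_mul_le_iff₀ hw).mpr (by linarith)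
  have hnonneg : 0 ≤ w⁻¹ • u := by positivity
  calc perspective φ u v
      ≤ perspective φ u w :=
        perspective_le_perspective_right_of_concaveOn hconc (left_mem_Icc.mpr zero_le_one) h0 hv
          hvw hmem
    _ ≤ perspective φ s w :=
        smul_le_smul_of_nonneg_left
          (hmono ⟨hnonneg, hle.trans hhalf⟩ ⟨hnonneg.trans hle, hhalf⟩ hle) hw.le

/-- For a normalized symmetric Bayes risk `φ` and an integer `m ≥ 2`,
for every `0 < v ≤ m + 1` and `0 < u ≤ min 1 v`, one has
`v·φ(u/v) ≤ (m+1)·φ(1/(m+1))`. -/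
theorem perspective_le_at_one_over_m_add_one
    (φ : ℝ → ℝ)
    (hconc : ConcaveOn ℝ (Set.Icc (0:ℝ) 1) φ)
    (hsym : ∀ u ∈ Set.Icc (0:ℝ) 1, φ u = φ (1 - u))
    (h0 : φ 0 = 0)
    (hhalf : φ (1/2) = 1)
    (m : ℕ) (hm : 2 ≤ m) :
    ∀ v u : ℝ, 0 < v → v ≤ (m : ℝ) + 1 → 0 < u → u ≤ min 1 v →
      v * φ (u / v) ≤ ((m : ℝ) + 1) * φ (1 / ((m : ℝ) + 1)) := by
  intro v u hv hvm hu huv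
  obtain ⟨hu1, huv⟩ := le_min_iff.mp huv
  have hm2 : (2 : ℝ) ≤ m := by exact_mod_cast hm
  simpa only [perspective, smul_eq_mul, inv_mul_eq_div] using
    perspective_le_at_one_over_m_add_one_general hconc hsym h0.ge hv hvm hu.le huv hu1
      (by linarith)
end

section
/- Let m ≥ 2 be an integer and let φ be a normalized symmetric Bayes risk. Define f(a, w) = w·φ(a/w) for reals 0 ≤ a ≤ w with w > 0. Suppose 0 ≤ a ≤ w ≤ m with w > 0, let δ ∈ (0, 1], and suppose the pair (a′, w′) arises from (a, w) in one of the three ways: (i) a′ = a + δ ≤ w and w′ = w; (ii) a′ = a + δ and w′ = w + δ; or (iii) a′ = a and w′ = w + δ. Then |f(a′, w′) − f(a, w)| ≤ max{3, 1 + (m+1)·φ(1/(m+1))}. (This is the sensitivity bound Δ_φ ≤ max{3, 1 + φ̌(1, m+1)} for the per-leaf weighted Bayes risk under a change of one example of a weighted sample of at most m examples with weights in (0,1]: the three cases correspond to a class flip, an example addition of class 1, and an example addition of class −1 at the leaf.) -/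
/-!
In terms of the class weights `x = a` and `y = w - a`, the criterion of a leaf is
`F x y = (x + y) * φ (x / (x + y))`, the perspective of a nonnegative concave function. It is
positively homogeneous, superadditive and nonnegative on the quadrant, hence monotone in each
variable, and `t * F x y = F (t * x) (t * y) ≤ F x (t * y)` for `t ∈ [0, 1]`; so `F x` is
subadditive. Raising the second weight by `δ ≤ 1` therefore raises `F` by at most
`F x δ ≤ F m 1`, and likewise for the first weight. A class flip compares two such
increments of one common leaf, so it obeys the same bound.
-/

open Set

/-- The splitting criterion contribution of a leaf whose two classes have weights `x` and `y`, i.e.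
`f (x, x + y) = φ̌ (x, x + y)` in the notation of the paper. It is written in the class weights
because it is monotone in each of them. At `x = y = 0` its value is `0`, which is the continuous
extension from the quadrant for bounded `φ`. -/
noncomputable def leafRisk (φ : ℝ → ℝ) (x y : ℝ) : ℝ := (x + y) * φ (x / (x + y))

lemma map_add_le_add_of_mul_le_map_mul {g : ℝ → ℝ}
    (hg : ∀ t ∈ Icc (0 : ℝ) 1, ∀ s, 0 ≤ s → t * g s ≤ g (t * s))
    {x y : ℝ} (hx : 0 ≤ x) (hy : 0 ≤ y) : g (x + y) ≤ g x + g y := by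
  rcases (add_nonneg hx hy).eq_or_lt' with hxy | hxy
  · obtain ⟨rfl, rfl⟩ := (add_eq_zero_iff_of_nonneg hx hy).1 hxy
    have hg0 : 0 ≤ g 0 := by simpa using hg 0 (by simp) 0 le_rfl
    simpa using hg0
  · calc g (x + y) = x / (x + y) * g (x + y) + y / (x + y) * g (x + y) := by
          rw [← add_mul, ← add_div, div_self hxy.ne', one_mul]
      _ ≤ g (x / (x + y) * (x + y)) + g (y / (x + y) * (x + y)) :=
          add_le_add
            (hg _ (unitInterval.div_mem hx hxy.le (le_add_of_nonneg_right hy)) _ hxy.le)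
            (hg _ (unitInterval.div_mem hy hxy.le (le_add_of_nonneg_left hx)) _ hxy.le)
      _ = g x + g y := by rw [div_mul_cancel₀ _ hxy.ne', div_mul_cancel₀ _ hxy.ne']

section leafRisk

variable {φ : ℝ → ℝ} {x y x' y' δ M D : ℝ}

lemma leafRisk_self_sub (φ : ℝ → ℝ) (a w : ℝ) : leafRisk φ a (w - a) = w * φ (a / w) := by
  rw [leafRisk, add_sub_cancel]

lemma leafRisk_mul_mul (φ : ℝ → ℝ) (t x y : ℝ) :
    leafRisk φ (t * x) (t * y) = t * leafRisk φ x y := by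
  rcases eq_or_ne t 0 with rfl | ht
  · simp [leafRisk]
  · rw [leafRisk, leafRisk, ← mul_add, mul_div_mul_left _ _ ht, mul_assoc]

lemma div_add_mem_Icc (hx : 0 ≤ x) (hy : 0 ≤ y) : x / (x + y) ∈ Icc (0 : ℝ) 1 :=
  unitInterval.div_mem hx (add_nonneg hx hy) (le_add_of_nonneg_right hy)

lemma leafRisk_nonneg (hφ : ∀ u ∈ Icc (0 : ℝ) 1, 0 ≤ φ u) (hx : 0 ≤ x) (hy : 0 ≤ y) :
    0 ≤ leafRisk φ x y :=
  mul_nonneg (add_nonneg hx hy) (hφ _ (div_add_mem_Icc hx hy))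

lemma leafRisk_add_leafRisk_le (hconc : ConcaveOn ℝ (Icc (0 : ℝ) 1) φ)
    (hx : 0 ≤ x) (hy : 0 ≤ y) (hx' : 0 ≤ x') (hy' : 0 ≤ y') :
    leafRisk φ x y + leafRisk φ x' y' ≤ leafRisk φ (x + x') (y + y') := by
  have hs := add_nonneg hx hy
  have hs' := add_nonneg hx' hy'
  rcases hs.eq_or_lt' with h | h
  · obtain ⟨rfl, rfl⟩ := (add_eq_zero_iff_of_nonneg hx hy).1 h
    simp [leafRisk]
  rcases hs'.eq_or_lt' with h' | h'
  · obtain ⟨rfl, rfl⟩ := (add_eq_zero_iff_of_nonneg hx' hy').1 h'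
    simp [leafRisk]
  have hS : 0 < (x + y) + (x' + y') := add_pos h h'
  have hJensen := (concaveOn_iff_div.1 hconc).2 (div_add_mem_Icc hx hy) (div_add_mem_Icc hx' hy')
    hs hs' hS
  simp only [smul_eq_mul] at hJensen
  have hmean : (x + y) / ((x + y) + (x' + y')) * (x / (x + y))
      + (x' + y') / ((x + y) + (x' + y')) * (x' / (x' + y'))
      = (x + x') / ((x + y) + (x' + y')) := by
    field_simp
  rw [hmean] at hJensen
  calc leafRisk φ x y + leafRisk φ x' y'
      = ((x + y) + (x' + y')) * ((x + y) / ((x + y) + (x' + y')) * φ (x / (x + y))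
          + (x' + y') / ((x + y) + (x' + y')) * φ (x' / (x' + y'))) := by
        simp only [leafRisk]
        field_simp
    _ ≤ ((x + y) + (x' + y')) * φ ((x + x') / ((x + y) + (x' + y'))) :=
        mul_le_mul_of_nonneg_left hJensen hS.le
    _ = leafRisk φ (x + x') (y + y') := by rw [leafRisk, add_add_add_comm x y]

lemma leafRisk_mono (hconc : ConcaveOn ℝ (Icc (0 : ℝ) 1) φ) (hφ : ∀ u ∈ Icc (0 : ℝ) 1, 0 ≤ φ u)
    (hx : 0 ≤ x) (hy : 0 ≤ y) (hxx' : x ≤ x') (hyy' : y ≤ y') :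
    leafRisk φ x y ≤ leafRisk φ x' y' := by
  have hdx := sub_nonneg.2 hxx'
  have hdy := sub_nonneg.2 hyy'
  calc leafRisk φ x y ≤ leafRisk φ x y + leafRisk φ (x' - x) (y' - y) :=
        le_add_of_nonneg_right (leafRisk_nonneg hφ hdx hdy)
    _ ≤ leafRisk φ (x + (x' - x)) (y + (y' - y)) := leafRisk_add_leafRisk_le hconc hx hy hdx hdy
    _ = leafRisk φ x' y' := by rw [add_sub_cancel, add_sub_cancel]

lemma leafRisk_add_left_le (hconc : ConcaveOn ℝ (Icc (0 : ℝ) 1) φ)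
    (hφ : ∀ u ∈ Icc (0 : ℝ) 1, 0 ≤ φ u) (hx : 0 ≤ x) (hx' : 0 ≤ x') (hy : 0 ≤ y) :
    leafRisk φ (x + x') y ≤ leafRisk φ x y + leafRisk φ x' y := by
  refine map_add_le_add_of_mul_le_map_mul (g := fun s ↦ leafRisk φ s y) (fun t ht s hs ↦ ?_) hx hx'
  rw [← leafRisk_mul_mul]
  exact leafRisk_mono hconc hφ (mul_nonneg ht.1 hs) (mul_nonneg ht.1 hy) le_rfl
    (mul_le_of_le_one_left hy ht.2)

lemma leafRisk_add_right_le (hconc : ConcaveOn ℝ (Icc (0 : ℝ) 1) φ)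
    (hφ : ∀ u ∈ Icc (0 : ℝ) 1, 0 ≤ φ u) (hx : 0 ≤ x) (hy : 0 ≤ y) (hy' : 0 ≤ y') :
    leafRisk φ x (y + y') ≤ leafRisk φ x y + leafRisk φ x y' := by
  refine map_add_le_add_of_mul_le_map_mul (g := leafRisk φ x) (fun t ht s hs ↦ ?_) hy hy'
  rw [← leafRisk_mul_mul]
  exact leafRisk_mono hconc hφ (mul_nonneg ht.1 hx) (mul_nonneg ht.1 hs)
    (mul_le_of_le_one_left hx ht.2) le_rfl

lemma leafRisk_add_left_mem_Icc (hconc : ConcaveOn ℝ (Icc (0 : ℝ) 1) φ)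
    (hφ : ∀ u ∈ Icc (0 : ℝ) 1, 0 ≤ φ u) (hx : 0 ≤ x) (hy : 0 ≤ y) (hyM : y ≤ M)
    (hδ : 0 ≤ δ) (hδD : δ ≤ D) :
    leafRisk φ (x + δ) y ∈ Icc (leafRisk φ x y) (leafRisk φ x y + leafRisk φ D M) where
  left := leafRisk_mono hconc hφ hx hy (le_add_of_nonneg_right hδ) le_rfl
  right := (leafRisk_add_left_le hconc hφ hx hδ hy).trans <|
    add_le_add_right (leafRisk_mono hconc hφ hδ hy hδD hyM) _

lemma leafRisk_add_right_mem_Icc (hconc : ConcaveOn ℝ (Icc (0 : ℝ) 1) φ)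
    (hφ : ∀ u ∈ Icc (0 : ℝ) 1, 0 ≤ φ u) (hx : 0 ≤ x) (hxM : x ≤ M) (hy : 0 ≤ y)
    (hδ : 0 ≤ δ) (hδD : δ ≤ D) :
    leafRisk φ x (y + δ) ∈ Icc (leafRisk φ x y) (leafRisk φ x y + leafRisk φ M D) where
  left := leafRisk_mono hconc hφ hx hy le_rfl (le_add_of_nonneg_right hδ)
  right := (leafRisk_add_right_le hconc hφ hx hy hδ).trans <|
    add_le_add_right (leafRisk_mono hconc hφ hx hδ hxM hδD) _

lemma abs_leafRisk_flip_sub_le (hconc : ConcaveOn ℝ (Icc (0 : ℝ) 1) φ)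
    (hφ : ∀ u ∈ Icc (0 : ℝ) 1, 0 ≤ φ u) (hx : 0 ≤ x) (hxM : x ≤ M) (hy : 0 ≤ y) (hyM : y ≤ M)
    (hδ : 0 ≤ δ) (hδD : δ ≤ D) :
    |leafRisk φ (x + δ) y - leafRisk φ x (y + δ)| ≤ max (leafRisk φ D M) (leafRisk φ M D) := by
  have hleft := leafRisk_add_left_mem_Icc hconc hφ hx hy hyM hδ hδD
  have hright := leafRisk_add_right_mem_Icc hconc hφ hx hxM hy hδ hδD
  rw [abs_sub_le_iff]
  constructor
  · exact le_max_of_le_left (by linarith [hleft.2, hright.1])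
  · exact le_max_of_le_right (by linarith [hleft.1, hright.2])

end leafRisk

theorem bayes_risk_sensitivity_general {φ : ℝ → ℝ} (hconc : ConcaveOn ℝ (Icc (0 : ℝ) 1) φ)
    (h0 : 0 ≤ φ 0) (h1 : 0 ≤ φ 1) {M D a w a' w' δ : ℝ}
    (ha : 0 ≤ a) (haw : a ≤ w) (hwM : w ≤ M) (hw : 0 < w) (hδ : 0 ≤ δ) (hδD : δ ≤ D)
    (hcase :
      (a' = a + δ ∧ a + δ ≤ w ∧ w' = w) ∨
      (a' = a + δ ∧ w' = w + δ) ∨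
      (a' = a ∧ w' = w + δ)) :
    |w' * φ (a' / w') - w * φ (a / w)| ≤
      (M + D) * max (φ (D / (M + D))) (φ (1 - D / (M + D))) := by
  have hφ : ∀ u ∈ Icc (0 : ℝ) 1, 0 ≤ φ u := fun u hu ↦
    (le_min h0 h1).trans (hconc.min_le_of_mem_Icc (by simp) (by simp) hu)
  have hMD : 0 < M + D := by linarith
  have hbound : (M + D) * max (φ (D / (M + D))) (φ (1 - D / (M + D))) =
      max (leafRisk φ D M) (leafRisk φ M D) := by
    rw [mul_max_of_nonneg _ _ hMD.le, one_sub_div hMD.ne', add_sub_cancel_right, leafRisk,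
      leafRisk, add_comm D M]
  have hy : 0 ≤ w - a := sub_nonneg.2 haw
  rw [hbound, ← leafRisk_self_sub, ← leafRisk_self_sub]
  rcases hcase with ⟨rfl, hle, rfl⟩ | ⟨rfl, rfl⟩ | ⟨rfl, rfl⟩
  · rw [← sub_add_cancel (w' - a) δ, sub_sub]
    exact abs_leafRisk_flip_sub_le hconc hφ ha (by linarith) (by linarith) (by linarith) hδ hδD
  · rw [add_sub_add_right_eq_sub]
    have hmem := leafRisk_add_left_mem_Icc hconc hφ ha hy (by linarith : w - a ≤ M) hδ hδD
    rw [abs_of_nonneg (sub_nonneg.2 hmem.1)]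
    exact le_max_of_le_left (sub_le_iff_le_add'.2 hmem.2)
  · rw [add_sub_right_comm]
    have hmem := leafRisk_add_right_mem_Icc hconc hφ ha (by linarith : a' ≤ M) hy hδ hδD
    rw [abs_of_nonneg (sub_nonneg.2 hmem.1)]
    exact le_max_of_le_right (sub_le_iff_le_add'.2 hmem.2)

/-- Sensitivity bound for the per-leaf weighted Bayes risk
`f(a, w) = w·φ(a/w)` under a change of one example (of weight `δ ∈ (0,1]`) of a weighted
sample of at most `m` examples: in each of the three neighboring cases (class flip,
addition of a positive example, addition of a negative example),
`|f(a′, w′) − f(a, w)| ≤ max{3, 1 + (m+1)·φ(1/(m+1))}`. -/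
theorem bayes_risk_sensitivity
    (φ : ℝ → ℝ)
    (hconc : ConcaveOn ℝ (Set.Icc (0:ℝ) 1) φ)
    (hsym : ∀ u ∈ Set.Icc (0:ℝ) 1, φ u = φ (1 - u))
    (h0 : φ 0 = 0)
    (hhalf : φ (1/2) = 1)
    (m : ℕ) (hm : 2 ≤ m)
    (a w a' w' δ : ℝ)
    (ha : 0 ≤ a) (haw : a ≤ w) (hwm : w ≤ (m : ℝ)) (hw : 0 < w)
    (hδ0 : 0 < δ) (hδ1 : δ ≤ 1)
    (hcase :
      (a' = a + δ ∧ a + δ ≤ w ∧ w' = w) ∨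
      (a' = a + δ ∧ w' = w + δ) ∨
      (a' = a ∧ w' = w + δ)) :
    |w' * φ (a' / w') - w * φ (a / w)| ≤
      max 3 (1 + ((m : ℝ) + 1) * φ (1 / ((m : ℝ) + 1))) := by
  have h1 : φ 1 = 0 := by simpa [h0] using hsym 1 (by simp)
  have hmem : 1 / ((m : ℝ) + 1) ∈ Icc (0 : ℝ) 1 :=
    unitInterval.div_mem zero_le_one (by positivity) (by simp)
  have hsharp := bayes_risk_sensitivity_general hconc h0.ge h1.ge ha haw hwm hw hδ0.le hδ1 hcase
  rw [← hsym _ hmem, max_self] at hsharp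
  exact le_max_of_le_right (hsharp.trans (le_add_of_nonneg_left zero_le_one))
end

section
/- Let α ∈ (0,1]. For every real z, the supremum over u ∈ [0,1] of z·u + 2α·√(u(1−u)) + 2(1−α)·min{u, 1−u} (the Legendre conjugate of the negative Mα Bayes risk, evaluated at z) is equal to ℓ_α(z) = 1 + z/2 + 𝟙[|z| > 2(1−α)]·(√(α² + (|z|/2 − (1−α))²) − α), where 𝟙[·] denotes the indicator. -/
/-!
Write `β = 1 - α`. Substituting `u = (1 + t) / 2` with `t ∈ [-1, 1]` centres the objective: up to
the constant `z / 2 + β` it becomes `z t / 2` plus an even function of `t`. Some optimal `t`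
therefore has the sign of `z`, and it remains to maximize `α √(1 - s²) + w s` over
`s = |t| ∈ [0, 1]`, where `w = |z| / 2 - β`. If `w ≤ 0` the maximum is `α`, at `s = 0`. Otherwise
it is the norm of `(α, w)`, by Cauchy–Schwarz against the unit vector `(√(1 - s²), s)`.
-/

open Set

lemma mul_sqrt_one_sub_sq_add_mul_le (a b : ℝ) {s : ℝ} (hs : |s| ≤ 1) :
    a * √(1 - s ^ 2) + b * s ≤ √(a ^ 2 + b ^ 2) := by
  have hunit : √(1 - s ^ 2) ^ 2 = 1 - s ^ 2 :=
    Real.sq_sqrt (sub_nonneg.2 ((sq_le_one_iff_abs_le_one s).2 hs))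
  have lagrange : (a * √(1 - s ^ 2) + b * s) ^ 2 + (a * s - b * √(1 - s ^ 2)) ^ 2
      = a ^ 2 + b ^ 2 := by
    linear_combination (a ^ 2 + b ^ 2) * hunit
  exact Real.le_sqrt_of_sq_le (lagrange ▸ le_add_of_nonneg_right (sq_nonneg _))

lemma mul_sqrt_one_sub_sq_add_mul_eq {a : ℝ} (ha : 0 ≤ a) (b : ℝ) :
    a * √(1 - (b / √(a ^ 2 + b ^ 2)) ^ 2) + b * (b / √(a ^ 2 + b ^ 2)) = √(a ^ 2 + b ^ 2) := by
  have hsq : √(a ^ 2 + b ^ 2) ^ 2 = a ^ 2 + b ^ 2 := Real.sq_sqrt (by positivity)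
  have hnonneg : 0 ≤ √(a ^ 2 + b ^ 2) := Real.sqrt_nonneg _
  generalize √(a ^ 2 + b ^ 2) = r at hsq hnonneg ⊢
  rcases hnonneg.eq_or_lt with rfl | hr
  · have ha0 : a = 0 := by nlinarith [sq_nonneg b]
    simp [ha0]
  · have hcos : √(1 - (b / r) ^ 2) = a / r := by
      rw [show 1 - (b / r) ^ 2 = (a / r) ^ 2 by field_simp; linarith,
        Real.sqrt_sq (div_nonneg ha hr.le)]
    rw [hcos]
    field_simp
    exact hsq.symm

lemma isGreatest_mul_sqrt_one_sub_sq_add_mul_of_nonneg {a b : ℝ} (ha : 0 ≤ a) (hb : 0 ≤ b) :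
    IsGreatest ((fun s : ℝ => a * √(1 - s ^ 2) + b * s) '' Icc 0 1) √(a ^ 2 + b ^ 2) := by
  refine ⟨⟨b / √(a ^ 2 + b ^ 2), ⟨by positivity, ?_⟩, mul_sqrt_one_sub_sq_add_mul_eq ha b⟩, ?_⟩
  · exact div_le_one_of_le₀ (Real.le_sqrt_of_sq_le (le_add_of_nonneg_left (sq_nonneg a)))
      (Real.sqrt_nonneg _)
  · rintro _ ⟨s, ⟨hs0, hs1⟩, rfl⟩
    exact mul_sqrt_one_sub_sq_add_mul_le a b (by rwa [abs_of_nonneg hs0])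

lemma isGreatest_mul_sqrt_one_sub_sq_add_mul_of_nonpos {a b : ℝ} (ha : 0 ≤ a) (hb : b ≤ 0) :
    IsGreatest ((fun s : ℝ => a * √(1 - s ^ 2) + b * s) '' Icc 0 1) a := by
  refine ⟨⟨0, left_mem_Icc.2 zero_le_one, by simp⟩, ?_⟩
  rintro _ ⟨s, ⟨hs, -⟩, rfl⟩
  have hsqrt : √(1 - s ^ 2) ≤ 1 := Real.sqrt_le_one.2 (sub_le_self 1 (sq_nonneg s))
  exact (add_le_of_nonpos_right (mul_nonpos_of_nonpos_of_nonneg hb hs)).trans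
    (mul_le_of_le_one_right ha hsqrt)

lemma isGreatest_mul_sqrt_one_sub_sq_add_mul {a : ℝ} (ha : 0 ≤ a) (b : ℝ) :
    IsGreatest ((fun s : ℝ => a * √(1 - s ^ 2) + b * s) '' Icc 0 1)
      (a + if 0 < b then √(a ^ 2 + b ^ 2) - a else 0) := by
  split_ifs with hb
  · rw [add_sub_cancel]
    exact isGreatest_mul_sqrt_one_sub_sq_add_mul_of_nonneg ha hb.le
  · rw [add_zero]
    exact isGreatest_mul_sqrt_one_sub_sq_add_mul_of_nonpos ha (not_lt.1 hb)

lemma isGreatest_image_mul_add_comp_abs {g : ℝ → ℝ} {z r m : ℝ}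
    (h : IsGreatest ((fun s => |z| * s + g s) '' Icc 0 r) m) :
    IsGreatest ((fun t => z * t + g |t|) '' Icc (-r) r) m := by
  obtain ⟨⟨s, ⟨hs0, hsr⟩, rfl⟩, hmax⟩ := h
  constructor
  · rcases le_total 0 z with hz | hz
    · exact ⟨s, ⟨by linarith, hsr⟩, by simp only [abs_of_nonneg hz, abs_of_nonneg hs0]⟩
    · exact ⟨-s, ⟨by linarith, by linarith⟩, by
        simp only [abs_of_nonpos hz, abs_neg, abs_of_nonneg hs0, mul_neg, neg_mul]⟩
  · rintro _ ⟨t, ht, rfl⟩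
    have hmul : z * t ≤ |z| * |t| := (le_abs_self _).trans (abs_mul z t).le
    calc z * t + g |t|
      _ ≤ |z| * |t| + g |t| := by gcongr
      _ ≤ |z| * s + g s := hmax ⟨|t|, ⟨abs_nonneg t, abs_le.2 ht⟩, rfl⟩

lemma sqrt_mul_one_sub_centred (t : ℝ) :
    √((1 + t) / 2 * (1 - (1 + t) / 2)) = √(1 - t ^ 2) / 2 := by
  rw [show (1 + t) / 2 * (1 - (1 + t) / 2) = (1 - t ^ 2) / 2 ^ 2 by ring,
    Real.sqrt_div' _ (by positivity), Real.sqrt_sq zero_le_two]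

lemma min_one_sub_centred (t : ℝ) : min ((1 + t) / 2) (1 - (1 + t) / 2) = (1 - |t|) / 2 := by
  rcases le_total 0 t with ht | ht
  · rw [abs_of_nonneg ht, min_eq_right (by linarith)]; ring
  · rw [abs_of_nonpos ht, min_eq_left (by linarith)]; ring

lemma image_one_add_div_two_Icc : (fun t : ℝ => (1 + t) / 2) '' Icc (-1) 1 = Icc 0 1 := by
  ext u
  constructor
  · rintro ⟨t, ⟨h1, h2⟩, rfl⟩
    exact ⟨by linarith, by linarith⟩
  · rintro ⟨h0, h1⟩
    exact ⟨2 * u - 1, ⟨by linarith, by linarith⟩, by ring⟩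

lemma image_malpha_objective_eq_image_centred (α β z : ℝ) :
    (fun u : ℝ => z * u + 2 * α * √(u * (1 - u)) + 2 * β * min u (1 - u)) '' Icc 0 1
      = (fun x => z / 2 + β + x) ''
          ((fun t => z / 2 * t + (α * √(1 - |t| ^ 2) - β * |t|)) '' Icc (-1) 1) := by
  rw [← image_one_add_div_two_Icc, image_image, image_image]
  refine image_congr fun t _ => ?_
  rw [sqrt_mul_one_sub_centred, min_one_sub_centred, sq_abs]
  ring

theorem malpha_legendre_conjugate_general {α : ℝ} (hα : 0 ≤ α) (β z : ℝ) :
    IsGreatest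
      ((fun u : ℝ => z * u + 2 * α * √(u * (1 - u)) + 2 * β * min u (1 - u)) '' Icc 0 1)
      (α + β + z / 2 + if 2 * β < |z| then √(α ^ 2 + (|z| / 2 - β) ^ 2) - α else 0) := by
  have hsplit (s : ℝ) :
      |z / 2| * s + (α * √(1 - s ^ 2) - β * s) = α * √(1 - s ^ 2) + (|z| / 2 - β) * s := by
    rw [abs_div, abs_two]
    ring
  have hcentred : IsGreatest
      ((fun t => z / 2 * t + (α * √(1 - |t| ^ 2) - β * |t|)) '' Icc (-1) 1)
      (α + if 0 < |z| / 2 - β then √(α ^ 2 + (|z| / 2 - β) ^ 2) - α else 0) := by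
    refine isGreatest_image_mul_add_comp_abs (g := fun s => α * √(1 - s ^ 2) - β * s) ?_
    simpa only [hsplit] using isGreatest_mul_sqrt_one_sub_sq_add_mul hα (|z| / 2 - β)
  have hthreshold : 2 * β < |z| ↔ 0 < |z| / 2 - β := by rw [sub_pos, lt_div_iff₀' two_pos]
  have hconst (c : ℝ) : α + β + z / 2 + c = z / 2 + β + (α + c) := by ring
  simp only [hthreshold, hconst, image_malpha_objective_eq_image_centred]
  exact add_right_mono.map_isGreatest hcentred

/-- For `α ∈ (0,1]` and every real `z`, the Legendre conjugate of the
negative Mα Bayes risk, `sup_{u∈[0,1]} {z·u + 2α√(u(1−u)) + 2(1−α)·min{u,1−u}}`,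
equals `ℓ_α(z) = 1 + z/2 + 𝟙[|z| > 2(1−α)]·(√(α² + (|z|/2 − (1−α))²) − α)`. -/
theorem malpha_legendre_conjugate
    (α : ℝ) (hα : α ∈ Set.Ioc (0:ℝ) 1) (z : ℝ) :
    sSup ((fun u : ℝ =>
        z * u + 2 * α * Real.sqrt (u * (1 - u)) + 2 * (1 - α) * min u (1 - u)) ''
          Set.Icc (0:ℝ) 1)
      = 1 + z / 2 +
          (if 2 * (1 - α) < |z| then
            Real.sqrt (α ^ 2 + (|z| / 2 - (1 - α)) ^ 2) - α
          else 0) := by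
  rw [(malpha_legendre_conjugate_general hα.1.le (1 - α) z).csSup_eq, add_sub_cancel]
end

section
/- Let α ∈ (0,1]. The function ℓ_α : ℝ → ℝ defined by ℓ_α(z) = 1 + z/2 + 𝟙[|z| > 2(1−α)]·(√(α² + (|z|/2 − (1−α))²) − α) is differentiable at every z ∈ ℝ, with derivative ℓ_α′(z) = (1/2)·(1 + 𝟙[|z| > 2(1−α)]·sign(z)·((|z|/2 − (1−α)) / √(α² + (|z|/2 − (1−α))²))); moreover ℓ_α′(z) ∈ (0,1) for every z. (The derivative ℓ_α′ is the inverse canonical link of the Mα-loss.) -/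
/-!
With `c = 1 - α`, or any other `c ≥ 0`, and `S` the soft-thresholding operator at level `c`, the
two branches of the indicator merge into `ℓ z = 1 + z / 2 + √(α² + S(z/2)²) - α`. Although `S` has
kinks at `±c`, its square is a sum of two squared positive parts, hence differentiable with
derivative `2 S`; and the square root is only evaluated at points `≥ α² > 0`. With `S = S(z/2)`, the
derivative is therefore `(1 + S / √(α² + S²)) / 2`, and `|S| < √(α² + S²)` places it in `(0, 1)`.
-/

theorem hasDerivAt_posPart_sq (x : ℝ) : HasDerivAt (fun y : ℝ ↦ y⁺ ^ 2) (2 * x⁺) x := by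
  have remainder_bounds (y : ℝ) :
      0 ≤ y⁺ ^ 2 - x⁺ ^ 2 - (y - x) * (2 * x⁺) ∧
        y⁺ ^ 2 - x⁺ ^ 2 - (y - x) * (2 * x⁺) ≤ (y - x) ^ 2 := by
    rcases le_total x 0 with hx | hx <;> rcases le_total y 0 with hy | hy <;>
      simp only [posPart_of_nonneg, posPart_of_nonpos, hx, hy] <;> constructor <;>
      nlinarith [sq_nonneg (y - x)]
  rw [hasDerivAt_iff_isLittleO]
  refine Asymptotics.IsBigO.trans_isLittleO (.of_norm_le fun y ↦ ?_)
    (Asymptotics.isLittleO_pow_sub_sub x one_lt_two)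
  rw [smul_eq_mul, Real.norm_of_nonneg (remainder_bounds y).1, Real.norm_eq_abs, sq_abs]
  exact (remainder_bounds y).2

theorem sign_div_of_pos {a : ℝ} (ha : 0 < a) (x : ℝ) : Real.sign (x / a) = Real.sign x := by
  simp only [Real.sign, div_lt_iff₀ ha, zero_mul, div_pos_iff_of_pos_right ha]

theorem abs_lt_sqrt_sq_add_sq {a : ℝ} (ha : a ≠ 0) (t : ℝ) : |t| < √(a ^ 2 + t ^ 2) :=
  Real.lt_sqrt_of_sq_lt <| by rw [sq_abs]; exact lt_add_of_pos_left _ (by positivity)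

theorem abs_div_sqrt_sq_add_sq_lt_one {a : ℝ} (ha : a ≠ 0) (t : ℝ) :
    |t / √(a ^ 2 + t ^ 2)| < 1 := by
  have hlt := abs_lt_sqrt_sq_add_sq ha t
  rw [abs_div, abs_of_nonneg (Real.sqrt_nonneg _)]
  exact (div_lt_one ((abs_nonneg t).trans_lt hlt)).2 hlt

/-- The soft-thresholding (shrinkage) operator at level `c`, which for `c ≥ 0` is usually written
`sign x * (|x| - c)⁺`; it absorbs the indicator of the threshold. A difference of positive parts is
chosen as the definition because its square can then be differentiated term by term. -/
noncomputable def softThreshold (c x : ℝ) : ℝ := (x - c)⁺ - (-x - c)⁺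

namespace softThreshold

variable {c x : ℝ}

theorem eq_zero_of_abs_le (h : |x| ≤ c) : softThreshold c x = 0 := by
  obtain ⟨hneg, hpos⟩ := abs_le.1 h
  rw [softThreshold, posPart_of_nonpos (by linarith), posPart_of_nonpos (by linarith), sub_self]

theorem eq_sign_mul_of_lt_abs (hc : 0 ≤ c) (h : c < |x|) :
    softThreshold c x = Real.sign x * (|x| - c) := by
  rcases lt_or_gt_of_ne (abs_pos.1 (hc.trans_lt h)) with hx | hx
  · rw [abs_of_neg hx] at h ⊢
    rw [softThreshold, Real.sign_of_neg hx, posPart_of_nonpos (by linarith),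
      posPart_of_nonneg (by linarith)]
    ring
  · rw [abs_of_pos hx] at h ⊢
    rw [softThreshold, Real.sign_of_pos hx, posPart_of_nonneg (by linarith),
      posPart_of_nonpos (by linarith)]
    ring

theorem sq_of_lt_abs (hc : 0 ≤ c) (h : c < |x|) : softThreshold c x ^ 2 = (|x| - c) ^ 2 := by
  rw [eq_sign_mul_of_lt_abs hc h]
  rcases Real.sign_apply_eq_of_ne_zero x (abs_pos.1 (hc.trans_lt h)) with hs | hs <;>
    rw [hs] <;> ring

theorem sq_eq_add (hc : 0 ≤ c) (x : ℝ) :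
    softThreshold c x ^ 2 = (x - c)⁺ ^ 2 + (-x - c)⁺ ^ 2 := by
  have disjoint_supports : (x - c)⁺ * (-x - c)⁺ = 0 := by
    rcases le_total x 0 with hx | hx
    · rw [posPart_of_nonpos (by linarith), zero_mul]
    · rw [posPart_of_nonpos (a := -x - c) (by linarith), mul_zero]
  rw [softThreshold]
  linear_combination -2 * disjoint_supports

theorem hasDerivAt_sq (hc : 0 ≤ c) (x : ℝ) :
    HasDerivAt (fun y ↦ softThreshold c y ^ 2) (2 * softThreshold c x) x := by
  have right := (hasDerivAt_posPart_sq (x - c)).comp x ((hasDerivAt_id x).sub_const c)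
  have left := (hasDerivAt_posPart_sq (-x - c)).comp x ((hasDerivAt_neg x).sub_const c)
  simp only [sq_eq_add hc]
  refine (right.add left).congr_deriv ?_
  rw [softThreshold]
  ring

theorem hasDerivAt_sqrt_sq_add_sq {a : ℝ} (ha : a ≠ 0) (hc : 0 ≤ c) (x : ℝ) :
    HasDerivAt (fun y ↦ √(a ^ 2 + softThreshold c y ^ 2))
      (softThreshold c x / √(a ^ 2 + softThreshold c x ^ 2)) x :=
  (((hasDerivAt_sq hc x).const_add (a ^ 2)).sqrt (by positivity)).congr_deriv
    (mul_div_mul_left _ _ two_ne_zero)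

theorem sqrt_sq_add_sq_sub_eq_ite {a : ℝ} (ha : 0 ≤ a) (hc : 0 ≤ c) (x : ℝ) :
    √(a ^ 2 + softThreshold c x ^ 2) - a =
      if c < |x| then √(a ^ 2 + (|x| - c) ^ 2) - a else 0 := by
  split_ifs with h
  · rw [sq_of_lt_abs hc h]
  · rw [eq_zero_of_abs_le (not_lt.1 h), zero_pow two_ne_zero, add_zero, Real.sqrt_sq ha, sub_self]

theorem div_sqrt_sq_add_sq_eq_ite (hc : 0 ≤ c) (a x : ℝ) :
    softThreshold c x / √(a ^ 2 + softThreshold c x ^ 2) =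
      (if c < |x| then 1 else 0) * Real.sign x * ((|x| - c) / √(a ^ 2 + (|x| - c) ^ 2)) := by
  split_ifs with h
  · rw [sq_of_lt_abs hc h, eq_sign_mul_of_lt_abs hc h, one_mul, mul_div_assoc]
  · rw [eq_zero_of_abs_le (not_lt.1 h), zero_div, zero_mul, zero_mul]

end softThreshold

theorem malpha_conjugate_hasDerivAt_general {α c : ℝ} (hα : 0 < α) (hc : 0 ≤ c) {ℓ : ℝ → ℝ}
    (hℓ : ∀ z : ℝ, ℓ z = 1 + z / 2 +
      (if 2 * c < |z| then √(α ^ 2 + (|z| / 2 - c) ^ 2) - α else 0)) (z : ℝ) :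
    HasDerivAt ℓ
      ((1 / 2) * (1 + (if 2 * c < |z| then (1 : ℝ) else 0) * Real.sign z *
        ((|z| / 2 - c) / √(α ^ 2 + (|z| / 2 - c) ^ 2)))) z ∧
    (1 / 2) * (1 + (if 2 * c < |z| then (1 : ℝ) else 0) * Real.sign z *
        ((|z| / 2 - c) / √(α ^ 2 + (|z| / 2 - c) ^ 2))) ∈ Set.Ioo (0 : ℝ) 1 := by
  have abs_half (z : ℝ) : |z| / 2 = |z / 2| := by rw [abs_div, abs_two]
  have threshold_iff (z : ℝ) : 2 * c < |z| ↔ c < |z / 2| := by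
    rw [← abs_half, lt_div_iff₀' two_pos]
  have hℓ_eq : ℓ = fun z ↦ 1 + z / 2 + (√(α ^ 2 + softThreshold c (z / 2) ^ 2) - α) := by
    funext z
    simp only [hℓ, threshold_iff, abs_half, softThreshold.sqrt_sq_add_sq_sub_eq_ite hα.le hc]
  simp only [threshold_iff, abs_half, ← sign_div_of_pos two_pos z,
    ← softThreshold.div_sqrt_sq_add_sq_eq_ite hc]
  constructor
  · have half : HasDerivAt (fun y : ℝ ↦ y / 2) (1 / 2) z := (hasDerivAt_id z).div_const 2
    have root := (softThreshold.hasDerivAt_sqrt_sq_add_sq hα.ne' hc (z / 2)).comp z half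
    rw [hℓ_eq]
    exact ((half.const_add 1).add (root.sub_const α)).congr_deriv (by ring)
  · obtain ⟨hlo, hhi⟩ := abs_lt.1 <|
      abs_div_sqrt_sq_add_sq_lt_one hα.ne' (softThreshold c (z / 2))
    constructor <;> linarith

/-- For `α ∈ (0,1]`, the function
`ℓ_α(z) = 1 + z/2 + 𝟙[|z| > 2(1−α)]·(√(α² + (|z|/2 − (1−α))²) − α)` is differentiable
everywhere, with derivative
`ℓ_α′(z) = (1/2)(1 + 𝟙[|z| > 2(1−α)]·sign(z)·((|z|/2 − (1−α))/√(α² + (|z|/2 − (1−α))²)))`,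
which moreover lies in `(0,1)` for every `z`. -/
theorem malpha_conjugate_hasDerivAt
    (α : ℝ) (hα : α ∈ Set.Ioc (0:ℝ) 1)
    (ℓ : ℝ → ℝ)
    (hℓ : ∀ z : ℝ, ℓ z = 1 + z / 2 +
      (if 2 * (1 - α) < |z| then
        Real.sqrt (α ^ 2 + (|z| / 2 - (1 - α)) ^ 2) - α
      else 0)) :
    ∀ z : ℝ,
      HasDerivAt ℓ
        ((1/2) * (1 + (if 2 * (1 - α) < |z| then (1:ℝ) else 0) * Real.sign z *
          ((|z| / 2 - (1 - α)) / Real.sqrt (α ^ 2 + (|z| / 2 - (1 - α)) ^ 2)))) z ∧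
      (1/2) * (1 + (if 2 * (1 - α) < |z| then (1:ℝ) else 0) * Real.sign z *
          ((|z| / 2 - (1 - α)) / Real.sqrt (α ^ 2 + (|z| / 2 - (1 - α)) ^ 2)))
        ∈ Set.Ioo (0:ℝ) 1 :=
  malpha_conjugate_hasDerivAt_general hα.1 (sub_nonneg.2 hα.2) hℓ
end

section
/- Let α ∈ (0,1] and let ℓ_α(z) = 1 + z/2 + 𝟙[|z| > 2(1−α)]·(√(α² + (|z|/2 − (1−α))²) − α). Then ℓ_α is twice differentiable at every z with |z| ≠ 2(1−α); its second derivative vanishes for |z| < 2(1−α), and for all z where it exists one has 0 ≤ ℓ_α″(z) ≤ 1/(2α). -/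
/-!
Near a point with `|z| < 2(1-α)` the function is affine. Near a point with `|z| > 2(1-α)` we have
`z ≠ 0`, so `|·|` is locally multiplication by a sign, and up to an affine term the function is
`√(α² + w²)` evaluated at an affine `w` of slope `±1/2`. Since `w ↦ √(α² + w²)` has second
derivative `α²/√(α² + w²)³ ∈ [0, 1/α]`, the chain rule yields a second derivative in `[0, 1/(4α)]`.
-/

open Filter Topology

section SecondDerivative

variable {𝕜 F : Type*} [NontriviallyNormedField 𝕜] [NormedAddCommGroup F] [NormedSpace 𝕜 F]
  {f g : 𝕜 → F} {f'' g'' : F} {x : 𝕜}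

/-- `HasSecondDerivAt f f'' x` says that `f` is twice differentiable at `x` with second derivative
`f''`. Differentiability is required on a neighbourhood of `x`, so that `deriv f` is the genuine
derivative of `f` wherever its germ at `x` matters. -/
def HasSecondDerivAt (f : 𝕜 → F) (f'' : F) (x : 𝕜) : Prop :=
  (∀ᶠ y in 𝓝 x, DifferentiableAt 𝕜 f y) ∧ HasDerivAt (deriv f) f'' x

namespace HasSecondDerivAt

lemma of_hasDerivAt {f' : 𝕜 → F} (hf : ∀ᶠ y in 𝓝 x, HasDerivAt f (f' y) y)
    (hf' : HasDerivAt f' f'' x) : HasSecondDerivAt f f'' x :=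
  ⟨hf.mono fun _ hy => hy.differentiableAt,
    hf'.congr_of_eventuallyEq (hf.mono fun _ hy => hy.deriv)⟩

lemma differentiableAt (hf : HasSecondDerivAt f f'' x) : DifferentiableAt 𝕜 f x :=
  hf.1.self_of_nhds

lemma differentiableAt_deriv (hf : HasSecondDerivAt f f'' x) :
    DifferentiableAt 𝕜 (deriv f) x :=
  hf.2.differentiableAt

lemma deriv_deriv (hf : HasSecondDerivAt f f'' x) : deriv (deriv f) x = f'' :=
  hf.2.deriv

lemma eventually_hasDerivAt (hf : HasSecondDerivAt f f'' x) :
    ∀ᶠ y in 𝓝 x, HasDerivAt f (deriv f y) y :=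
  hf.1.mono fun _ hy => hy.hasDerivAt

lemma congr_of_eventuallyEq (hf : HasSecondDerivAt f f'' x) (h : g =ᶠ[𝓝 x] f) :
    HasSecondDerivAt g f'' x := by
  refine of_hasDerivAt ?_ hf.2
  filter_upwards [hf.eventually_hasDerivAt, h.eventuallyEq_nhds] with y hy hgf
  exact hy.congr_of_eventuallyEq hgf

lemma add (hf : HasSecondDerivAt f f'' x) (hg : HasSecondDerivAt g g'' x) :
    HasSecondDerivAt (fun y => f y + g y) (f'' + g'') x := by
  refine of_hasDerivAt ?_ (hf.2.add hg.2)
  filter_upwards [hf.eventually_hasDerivAt, hg.eventually_hasDerivAt] with y hfy hgy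
  exact hfy.add hgy

lemma comp_affine {m b : 𝕜} (hf : HasSecondDerivAt f f'' (m * x + b)) :
    HasSecondDerivAt (fun y => f (m * y + b)) (m ^ 2 • f'') x := by
  have h_affine (y : 𝕜) : HasDerivAt (fun y => m * y + b) m y := by
    simpa only [mul_one, id] using ((hasDerivAt_id y).const_mul m).add_const b
  have hderiv : HasDerivAt (fun y => m • deriv f (m * y + b)) (m ^ 2 • f'') x := by
    rw [sq, mul_smul]
    exact (hf.2.scomp x (h_affine x)).const_smul m
  refine of_hasDerivAt ?_ hderiv
  filter_upwards [(h_affine x).continuousAt.eventually hf.eventually_hasDerivAt] with y hy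
  exact hy.scomp y (h_affine y)

end HasSecondDerivAt

lemma hasSecondDerivAt_affine (m b : F) (x : 𝕜) :
    HasSecondDerivAt (fun y : 𝕜 => y • m + b) 0 x := by
  refine .of_hasDerivAt (f' := fun _ => m) (.of_forall fun y => ?_) (hasDerivAt_const x m)
  simpa only [one_smul, id] using ((hasDerivAt_id y).smul_const m).add_const b

end SecondDerivative

lemma HasSecondDerivAt.comp_abs {F : Type*} [NormedAddCommGroup F] [NormedSpace ℝ F]
    {f : ℝ → F} {f'' : F} {x : ℝ} (hf : HasSecondDerivAt f f'' |x|) (hx : x ≠ 0) :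
    HasSecondDerivAt (fun y => f |y|) f'' x := by
  obtain ⟨ε, hε, habs⟩ : ∃ ε : ℝ, ε ^ 2 = 1 ∧ ∀ᶠ y in 𝓝 x, |y| = ε * y + 0 := by
    rcases hx.lt_or_gt with hneg | hpos
    · refine ⟨-1, by norm_num, ?_⟩
      filter_upwards [eventually_lt_nhds hneg] with y hy
      rw [abs_of_neg hy, neg_one_mul, add_zero]
    · refine ⟨1, one_pow 2, ?_⟩
      filter_upwards [eventually_gt_nhds hpos] with y hy
      rw [abs_of_pos hy, one_mul, add_zero]
  rw [habs.self_of_nhds] at hf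
  have hcomp := hf.comp_affine
  rw [hε, one_smul] at hcomp
  exact hcomp.congr_of_eventuallyEq (habs.mono fun y hy => congrArg f hy)

section SqrtSqAddSq

variable {a : ℝ}

lemma hasDerivAt_sqrt_sq_add_sq (ha : a ≠ 0) (w : ℝ) :
    HasDerivAt (fun w => √(a ^ 2 + w ^ 2)) (w / √(a ^ 2 + w ^ 2)) w := by
  have hsq : HasDerivAt (fun w : ℝ => a ^ 2 + w ^ 2) (2 * w) w := by
    simpa using (hasDerivAt_pow 2 w).const_add (a ^ 2)
  exact (hsq.sqrt (by positivity)).congr_deriv (mul_div_mul_left _ _ two_ne_zero)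

lemma hasSecondDerivAt_sqrt_sq_add_sq (ha : a ≠ 0) (w : ℝ) :
    HasSecondDerivAt (fun w => √(a ^ 2 + w ^ 2)) (a ^ 2 / √(a ^ 2 + w ^ 2) ^ 3) w := by
  have hS : √(a ^ 2 + w ^ 2) ≠ 0 := by positivity
  have hS_sq : √(a ^ 2 + w ^ 2) ^ 2 = a ^ 2 + w ^ 2 := Real.sq_sqrt (by positivity)
  have hquot := (hasDerivAt_id w).div (hasDerivAt_sqrt_sq_add_sq ha w) hS
  refine .of_hasDerivAt (.of_forall (hasDerivAt_sqrt_sq_add_sq ha)) (hquot.congr_deriv ?_)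
  -- The numerator of the quotient rule is `S - w²/S = a²/S`, where `S² = a² + w²`.
  simp only [id]
  field_simp
  rw [hS_sq]
  ring

lemma sq_div_sqrt_sq_add_sq_pow_three_le (ha : 0 < a) (w : ℝ) :
    a ^ 2 / √(a ^ 2 + w ^ 2) ^ 3 ≤ 1 / a := by
  have hS : a ≤ √(a ^ 2 + w ^ 2) :=
    Real.le_sqrt_of_sq_le (le_add_of_nonneg_right (sq_nonneg w))
  calc a ^ 2 / √(a ^ 2 + w ^ 2) ^ 3 ≤ a ^ 2 / a ^ 3 := by gcongr
    _ = 1 / a := by field_simp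

end SqrtSqAddSq

section Conjugate

variable {α c : ℝ} {ℓ : ℝ → ℝ} {z : ℝ}

lemma hasSecondDerivAt_malpha_conjugate_of_abs_lt
    (hℓ : ∀ z, ℓ z = 1 + z / 2 +
      (if 2 * c < |z| then √(α ^ 2 + (|z| / 2 - c) ^ 2) - α else 0))
    (hz : |z| < 2 * c) : HasSecondDerivAt ℓ 0 z := by
  refine (hasSecondDerivAt_affine (1 / 2 : ℝ) 1 z).congr_of_eventuallyEq ?_
  filter_upwards [continuous_abs.continuousAt.eventually_lt_const hz] with y hy
  rw [hℓ, if_neg hy.not_gt, smul_eq_mul]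
  ring

lemma hasSecondDerivAt_malpha_conjugate_of_lt_abs (hα : α ≠ 0)
    (hℓ : ∀ z, ℓ z = 1 + z / 2 +
      (if 2 * c < |z| then √(α ^ 2 + (|z| / 2 - c) ^ 2) - α else 0))
    (hz₀ : z ≠ 0) (hz : 2 * c < |z|) :
    HasSecondDerivAt ℓ (α ^ 2 / √(α ^ 2 + (|z| / 2 - c) ^ 2) ^ 3 / 4) z := by
  have hsqrt : HasSecondDerivAt (fun y => √(α ^ 2 + (1 / 2 * |y| + -c) ^ 2))
      ((1 / 2 : ℝ) ^ 2 • (α ^ 2 / √(α ^ 2 + (1 / 2 * |z| + -c) ^ 2) ^ 3)) z :=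
    (hasSecondDerivAt_sqrt_sq_add_sq hα _).comp_affine.comp_abs hz₀
  have hsum := (hasSecondDerivAt_affine (1 / 2 : ℝ) (1 - α) z).add hsqrt
  have hℓ_eq : ℓ =ᶠ[𝓝 z]
      fun y => (y • (1 / 2 : ℝ) + (1 - α)) + √(α ^ 2 + (1 / 2 * |y| + -c) ^ 2) := by
    filter_upwards [continuous_abs.continuousAt.eventually_const_lt hz] with y hy
    rw [hℓ, if_pos hy, smul_eq_mul]
    ring_nf
  convert hsum.congr_of_eventuallyEq hℓ_eq using 1
  rw [smul_eq_mul]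
  ring_nf

theorem malpha_conjugate_second_derivative_general (hα : 0 < α) (hc : 0 ≤ c)
    (hℓ : ∀ z, ℓ z = 1 + z / 2 +
      (if 2 * c < |z| then √(α ^ 2 + (|z| / 2 - c) ^ 2) - α else 0))
    (hz : |z| ≠ 2 * c) :
    DifferentiableAt ℝ ℓ z ∧
      DifferentiableAt ℝ (deriv ℓ) z ∧
      (|z| < 2 * c → deriv (deriv ℓ) z = 0) ∧
      0 ≤ deriv (deriv ℓ) z ∧
      deriv (deriv ℓ) z ≤ 1 / (4 * α) := by
  rcases hz.lt_or_gt with hin | hout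
  · have h := hasSecondDerivAt_malpha_conjugate_of_abs_lt hℓ hin
    refine ⟨h.differentiableAt, h.differentiableAt_deriv, fun _ => h.deriv_deriv,
      h.deriv_deriv.ge, ?_⟩
    rw [h.deriv_deriv]
    positivity
  · have hz₀ : z ≠ 0 := abs_pos.1 (by linarith)
    have h := hasSecondDerivAt_malpha_conjugate_of_lt_abs hα.ne' hℓ hz₀ hout
    refine ⟨h.differentiableAt, h.differentiableAt_deriv, fun hin => absurd hin hout.not_gt, ?_⟩
    rw [h.deriv_deriv]
    refine ⟨by positivity, ?_⟩
    calc α ^ 2 / √(α ^ 2 + (|z| / 2 - c) ^ 2) ^ 3 / 4 ≤ 1 / α / 4 := by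
          gcongr ?_ / 4
          exact sq_div_sqrt_sq_add_sq_pow_three_le hα _
      _ = 1 / (4 * α) := by rw [div_div, mul_comm]

end Conjugate

/-- For `α ∈ (0,1]`, the function
`ℓ_α(z) = 1 + z/2 + 𝟙[|z| > 2(1−α)]·(√(α² + (|z|/2 − (1−α))²) − α)` is twice
differentiable at every `z` with `|z| ≠ 2(1−α)`; its second derivative vanishes for
`|z| < 2(1−α)`, and everywhere it exists it satisfies `0 ≤ ℓ_α″(z) ≤ 1/(2α)`. -/
theorem malpha_conjugate_second_derivative
    (α : ℝ) (hα : α ∈ Set.Ioc (0:ℝ) 1)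
    (ℓ : ℝ → ℝ)
    (hℓ : ∀ z : ℝ, ℓ z = 1 + z / 2 +
      (if 2 * (1 - α) < |z| then
        Real.sqrt (α ^ 2 + (|z| / 2 - (1 - α)) ^ 2) - α
      else 0)) :
    ∀ z : ℝ, |z| ≠ 2 * (1 - α) →
      DifferentiableAt ℝ ℓ z ∧
      DifferentiableAt ℝ (deriv ℓ) z ∧
      (|z| < 2 * (1 - α) → deriv (deriv ℓ) z = 0) ∧
      0 ≤ deriv (deriv ℓ) z ∧
      deriv (deriv ℓ) z ≤ 1 / (2 * α) := by
  intro z hz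
  obtain ⟨hd, hd', hzero, hnonneg, hle⟩ :=
    malpha_conjugate_second_derivative_general hα.1 (sub_nonneg.2 hα.2) hℓ hz
  exact ⟨hd, hd', hzero, hnonneg, hle.trans (by have := hα.1; gcongr; norm_num)⟩
end

section
/- Let c ∈ [0,1] and α′, α ∈ [0,1] with α ≤ α′·exp(c·(1 − α′)), and let M, M′, E, E′ be reals with 0 ≤ E′ ≤ E ≤ M and M′ ≤ (1 − c)·M. Then α·M′ + (1−α)·E′ ≤ (1 − c·α)·(α′·M + (1−α′)·E). (With c = γ²·w̃/16, this is the one-iteration boosting inequality: under the monotonicity condition on consecutive loss parameters α′ = α_{ℓ−1}, α = α_ℓ, the tuned Mα_ℓ-objective of the grown tree is at most (1 − γ²·w̃·α_ℓ/16) times the Mα_{ℓ−1}-objective of the previous tree.) -/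
/-!
Monotonicity of the objective reduces the claim to `M' = (1 - c) M` and `E' = E`. Both sides are
then linear in `(M, E)` and agree at `M = E`, so their difference is a multiple of `M - E`; its
coefficient `α' - α (1 - t)`, where `t = c (1 - α')`, is nonnegative because
`α (1 - t) ≤ α exp (-t) ≤ α'`.
-/

/-- The `Mα`-objective of a tree with Matsushita Bayes risk `M` and empirical risk `E`: the mixture
of the two risks with loss parameter `α`. It is kept as a bare function of the risks, since the
tree enters the analysis only through them. -/
def malphaObjective {R : Type*} [Ring R] (α M E : R) : R :=
  α * M + (1 - α) * E

theorem malphaObjective_le_malphaObjective {R : Type*} [Ring R] [PartialOrder R] [IsOrderedRing R]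
    {α M M' E E' : R} (hα0 : 0 ≤ α) (hα1 : α ≤ 1) (hM : M' ≤ M) (hE : E' ≤ E) :
    malphaObjective α M' E' ≤ malphaObjective α M E :=
  add_le_add (mul_le_mul_of_nonneg_left hM hα0)
    (mul_le_mul_of_nonneg_left hE (sub_nonneg.2 hα1))

theorem mul_malphaObjective_sub_malphaObjective_mul {R : Type*} [CommRing R] (c α' α M E : R) :
    (1 - c * α) * malphaObjective α' M E - malphaObjective α ((1 - c) * M) E =
      (α' - α * (1 - c * (1 - α'))) * (M - E) := by
  unfold malphaObjective
  ring

theorem mul_one_sub_le_of_le_mul_exp {a b t : ℝ} (ha : 0 ≤ a) (h : a ≤ b * Real.exp t) :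
    a * (1 - t) ≤ b :=
  calc a * (1 - t) ≤ a * Real.exp (-t) :=
        mul_le_mul_of_nonneg_left (Real.one_sub_le_exp_neg t) ha
    _ = a / Real.exp t := by rw [Real.exp_neg, div_eq_mul_inv]
    _ ≤ b := (div_le_iff₀ (Real.exp_pos t)).2 h

theorem malpha_objective_one_step_tuned_general {c α' α M M' E E' : ℝ}
    (hα0 : 0 ≤ α) (hα1 : α ≤ 1) (hmono : α ≤ α' * Real.exp (c * (1 - α')))
    (hE'E : E' ≤ E) (hEM : E ≤ M) (hM' : M' ≤ (1 - c) * M) :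
    malphaObjective α M' E' ≤ (1 - c * α) * malphaObjective α' M E := by
  have hcoeff : 0 ≤ α' - α * (1 - c * (1 - α')) :=
    sub_nonneg.2 (mul_one_sub_le_of_le_mul_exp hα0 hmono)
  calc malphaObjective α M' E'
      ≤ malphaObjective α ((1 - c) * M) E :=
        malphaObjective_le_malphaObjective hα0 hα1 hM' hE'E
    _ ≤ (1 - c * α) * malphaObjective α' M E := by
        rw [← sub_nonneg, mul_malphaObjective_sub_malphaObjective_mul]
        exact mul_nonneg hcoeff (sub_nonneg.2 hEM)

/-- One-iteration boosting inequality with tuned loss parameters: for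
`c ∈ [0,1]`, `α′, α ∈ [0,1]` with `α ≤ α′·exp(c·(1 − α′))`, and reals
`0 ≤ E′ ≤ E ≤ M`, `M′ ≤ (1 − c)·M`, one has
`α·M′ + (1−α)·E′ ≤ (1 − c·α)·(α′·M + (1−α′)·E)`. -/
theorem malpha_objective_one_step_tuned
    (c α' α : ℝ) (hc : c ∈ Set.Icc (0:ℝ) 1)
    (hα' : α' ∈ Set.Icc (0:ℝ) 1) (hα : α ∈ Set.Icc (0:ℝ) 1)
    (hmono : α ≤ α' * Real.exp (c * (1 - α')))
    (M M' E E' : ℝ)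
    (hE'0 : 0 ≤ E') (hE'E : E' ≤ E) (hEM : E ≤ M)
    (hM' : M' ≤ (1 - c) * M) :
    α * M' + (1 - α) * E' ≤ (1 - c * α) * (α' * M + (1 - α') * E) :=
  malpha_objective_one_step_tuned_general hα.1 hα.2 hmono hE'E hEM hM'
end

section
/- Let γ ∈ (0,1], α ∈ (0,1], L ≥ 1, and let (w̃_ℓ)_{ℓ=1..L} be a sequence in [0,1] with w̃_ℓ ≥ 1/ℓ for every ℓ. Let (M_ℓ)_{ℓ=1..L+1} and (E_ℓ)_{ℓ=1..L+1} be reals with 0 ≤ E_ℓ ≤ M_ℓ for all ℓ, E_{ℓ+1} ≤ E_ℓ and M_{ℓ+1} ≤ (1 − γ²·w̃_ℓ·α... correction: M_{ℓ+1} ≤ (1 − γ²·w̃_ℓ/16)·M_ℓ for 1 ≤ ℓ ≤ L, and M_1 ≤ 1. Then for every ξ ∈ (0,1]: if L ≥ (1/ξ)^{16/(α·γ²)}, then E_{L+1} ≤ ξ. (This is the constant-α corollary: splitting the heaviest leaf, whose normalized weight is at least 1/ℓ at iteration ℓ, drives the empirical risk below ξ after at most (1/ξ)^{16/(αγ²)}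 boosting iterations.) -/
/-!
Since `1 - x ≤ exp (-x)`, the multiplicative decrease of the Matsushita risk telescopes to
`M (L + 1) ≤ exp (-(γ ^ 2 / 16) * ∑ ℓ ≤ L, wt ℓ)`. As `wt ℓ ≥ 1 / ℓ`, the sum of the weights is at
least the harmonic number `H_L ≥ log (L + 1)`, so the risk decays polynomially:
`M (L + 1) ≤ (L + 1) ^ (-γ ^ 2 / 16)`. The loss parameter `α ≤ 1` only raises the required number
of iterations.
-/

open Finset Real

theorem le_exp_neg_sum_mul_of_le_one_sub_mul {u a : ℕ → ℝ} {N : ℕ} (hu : ∀ n < N, 0 ≤ u n)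
    (hstep : ∀ n < N, u (n + 1) ≤ (1 - a n) * u n) :
    u N ≤ exp (-∑ n ∈ range N, a n) * u 0 := by
  induction N with
  | zero => simp
  | succ N ih =>
    have hN : N < N + 1 := N.lt_succ_self
    calc u (N + 1) ≤ (1 - a N) * u N := hstep N hN
      _ ≤ exp (-a N) * u N := mul_le_mul_of_nonneg_right (one_sub_le_exp_neg _) (hu N hN)
      _ ≤ exp (-a N) * (exp (-∑ n ∈ range N, a n) * u 0) := by
        gcongr
        exact ih (fun n hn ↦ hu n (hn.trans hN)) (fun n hn ↦ hstep n (hn.trans hN))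
      _ = exp (-∑ n ∈ range (N + 1), a n) * u 0 := by
        rw [← mul_assoc, ← exp_add, ← neg_add, add_comm (a N), sum_range_succ]

theorem log_add_one_le_sum_of_inv_le {w : ℕ → ℝ} {N : ℕ}
    (hw : ∀ n < N, ((n : ℝ) + 1)⁻¹ ≤ w n) :
    log (N + 1) ≤ ∑ n ∈ range N, w n :=
  calc log (N + 1) ≤ harmonic N := mod_cast log_add_one_le_harmonic N
    _ = ∑ n ∈ range N, ((n : ℝ) + 1)⁻¹ := by simp [harmonic]
    _ ≤ ∑ n ∈ range N, w n := sum_le_sum fun n hn ↦ hw n (mem_range.mp hn)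

theorem le_rpow_neg_mul_of_le_one_sub_mul {u w : ℕ → ℝ} {c : ℝ} {N : ℕ} (hc : 0 ≤ c)
    (hu : ∀ n ≤ N, 0 ≤ u n) (hw : ∀ n < N, ((n : ℝ) + 1)⁻¹ ≤ w n)
    (hstep : ∀ n < N, u (n + 1) ≤ (1 - c * w n) * u n) :
    u N ≤ ((N : ℝ) + 1) ^ (-c) * u 0 := by
  have hu0 : 0 ≤ u 0 := hu 0 N.zero_le
  calc u N ≤ exp (-∑ n ∈ range N, c * w n) * u 0 :=
        le_exp_neg_sum_mul_of_le_one_sub_mul (fun n hn ↦ hu n hn.le) hstep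
    _ = exp (-(c * ∑ n ∈ range N, w n)) * u 0 := by rw [mul_sum]
    _ ≤ exp (-(c * log (N + 1))) * u 0 := by
        gcongr
        exact log_add_one_le_sum_of_inv_le hw
    _ = ((N : ℝ) + 1) ^ (-c) * u 0 := by
        rw [rpow_def_of_pos N.cast_add_one_pos, mul_neg, mul_comm c]

theorem rpow_neg_le_of_one_div_rpow_inv_le {x ξ c : ℝ} (hξ : 0 < ξ) (hc : 0 < c)
    (h : (1 / ξ) ^ c⁻¹ ≤ x) : x ^ (-c) ≤ ξ := by
  have hx : 0 ≤ x := (by positivity : 0 ≤ (1 / ξ) ^ c⁻¹).trans h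
  have hξx : 1 / ξ ≤ x ^ c := (rpow_inv_le_iff_of_pos (by positivity) hx hc).mp h
  rw [rpow_neg hx, ← one_div]
  exact (one_div_le hξ ((one_div_pos.mpr hξ).trans_le hξx)).mp hξx

theorem rpow_div_le_rpow_div_mul {x a b α : ℝ} (hx : 1 ≤ x) (hab : 0 ≤ a / b) (hα0 : 0 < α)
    (hα1 : α ≤ 1) : x ^ (a / b) ≤ x ^ (a / (α * b)) := by
  rw [div_mul_eq_div_div_swap]
  exact rpow_le_rpow_of_exponent_le hx (le_div_self hab hα0 hα1)

theorem boosting_rate_decision_tree_constant_alpha_general {γ ξ : ℝ} (hγ : γ ≠ 0) (hξ : 0 < ξ)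
    {L : ℕ} {wt M : ℕ → ℝ} (hwt : ∀ ℓ, 1 ≤ ℓ → ℓ ≤ L → 1 / (ℓ : ℝ) ≤ wt ℓ)
    (hM : ∀ ℓ, 1 ≤ ℓ → ℓ ≤ L + 1 → 0 ≤ M ℓ)
    (hstep : ∀ ℓ, 1 ≤ ℓ → ℓ ≤ L → M (ℓ + 1) ≤ (1 - γ ^ 2 * wt ℓ / 16) * M ℓ)
    (hM1 : M 1 ≤ 1) (hL : (1 / ξ) ^ (16 / γ ^ 2) ≤ (L : ℝ) + 1) :
    M (L + 1) ≤ ξ := by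
  have hdecay : M (L + 1) ≤ ((L : ℝ) + 1) ^ (-(γ ^ 2 / 16)) * M 1 := by
    refine le_rpow_neg_mul_of_le_one_sub_mul (u := fun n ↦ M (n + 1)) (w := fun n ↦ wt (n + 1))
      (by positivity) (fun n hn ↦ hM (n + 1) (by lia) (by lia)) (fun n hn ↦ ?_) (fun n hn ↦ ?_)
    · simpa using hwt (n + 1) (by lia) hn
    · simpa only [div_mul_eq_mul_div] using hstep (n + 1) (by lia) hn
  calc M (L + 1) ≤ ((L : ℝ) + 1) ^ (-(γ ^ 2 / 16)) * M 1 := hdecay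
    _ ≤ ((L : ℝ) + 1) ^ (-(γ ^ 2 / 16)) := mul_le_of_le_one_right (by positivity) hM1
    _ ≤ ξ := rpow_neg_le_of_one_div_rpow_inv_le hξ (by positivity) (by rwa [inv_div])

/-- Constant-α corollary of the decision-tree boosting rate: splitting the
heaviest leaf (so `wt ℓ ≥ 1/ℓ`) drives the empirical risk below `ξ` after at most
`(1/ξ)^{16/(αγ²)}` boosting iterations. -/
theorem boosting_rate_decision_tree_constant_alpha
    (γ α : ℝ) (hγ : γ ∈ Set.Ioc (0:ℝ) 1) (hα : α ∈ Set.Ioc (0:ℝ) 1)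
    (L : ℕ) (hL : 1 ≤ L)
    (wt M E : ℕ → ℝ)
    (hwt : ∀ ℓ, 1 ≤ ℓ → ℓ ≤ L → wt ℓ ∈ Set.Icc (0:ℝ) 1 ∧ 1 / (ℓ : ℝ) ≤ wt ℓ)
    (hEM : ∀ ℓ, 1 ≤ ℓ → ℓ ≤ L + 1 → 0 ≤ E ℓ ∧ E ℓ ≤ M ℓ)
    (hstep : ∀ ℓ, 1 ≤ ℓ → ℓ ≤ L →
      E (ℓ + 1) ≤ E ℓ ∧ M (ℓ + 1) ≤ (1 - γ ^ 2 * wt ℓ / 16) * M ℓ)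
    (hM1 : M 1 ≤ 1) :
    ∀ ξ : ℝ, ξ ∈ Set.Ioc (0:ℝ) 1 →
      (1 / ξ) ^ (16 / (α * γ ^ 2)) ≤ (L : ℝ) →
      E (L + 1) ≤ ξ := by
  intro ξ hξ hLξ
  have hiter : (1 / ξ) ^ (16 / γ ^ 2) ≤ (L : ℝ) + 1 :=
    (rpow_div_le_rpow_div_mul (one_le_one_div hξ.1 hξ.2) (by positivity) hα.1 hα.2).trans
      (hLξ.trans (le_add_of_nonneg_right zero_le_one))
  exact (hEM (L + 1) (by lia) le_rfl).2.trans <|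
    boosting_rate_decision_tree_constant_alpha_general hγ.1.ne' hξ.1
      (fun ℓ h1 hℓ ↦ (hwt ℓ h1 hℓ).2) (fun ℓ h1 hℓ ↦ (hEM ℓ h1 hℓ).1.trans (hEM ℓ h1 hℓ).2)
      (fun ℓ h1 hℓ ↦ (hstep ℓ h1 hℓ).2) hM1 hiter
end
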